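/- arXiv:1309.0595 — 3 statements merged into one kernel-verified Lean document; each statement's English description precedes it below -/
import Mathlib

section
/- For every real number a > 0 and every real u with 0 ≤ u < 1, the series ∑_{n≥0} [(a)_n · (a+1/3)_n · (a+2/3)_n] / [((3a+1)/2)_n · ((3a+2)/2)_n · n!] · u^n converges and equals (3/(3 cos²α − sin²α))^{3a}, where α = (1/3)·arcsin(√u). -/
open Real

/-- Pochhammer symbol `(a)_n = a(a+1)⋯(a+n-1)`. -/
noncomputable def poch (a : ℝ) (n : ℕ) : ℝ :=
  ∏ i ∈ Finset.range n, (a + i)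

/-!
With `r = 3a` and `z = 4u/27`, the series is `G r = ∑ₙ Aₙ(r) zⁿ`, where `Aₙ(r)` are the Raney
numbers of parameter `3`. They satisfy `Aₙ₊₁(r + 1) = Aₙ₊₁(r) + Aₙ(r + 3)`, and since they are
polynomials in `r` this gives the Rothe–Hagen identity `∑ᵢ Aᵢ(r) Aₙ₋ᵢ(s) = Aₙ(r + s)`. Hence
`G (r + s) = G r * G s`, and continuity in `r` forces `G r = G 1 ^ r`. The recurrence at `r = 0`
reads `G 1 = 1 + z * G 1 ^ 3`. By the triple-angle formula `3 / (3 cos² α - sin² α)` is also a root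
of this cubic, and, being at most the critical value `3 / 2`, it is the smallest nonnegative root.
So is `G 1`, because `S ↦ 1 + z * S ^ 3` dominates the passage from one partial sum to the next.
-/

open Finset Polynomial

section Pochhammer

lemma poch_succ (a : ℝ) (n : ℕ) : poch a (n + 1) = poch a n * (a + n) :=
  prod_range_succ _ _

lemma poch_add (a : ℝ) (m n : ℕ) : poch a (m + n) = poch a m * poch (a + m) n := by
  simp only [poch, prod_range_add, Nat.cast_add, add_assoc]

lemma poch_succ' (a : ℝ) (n : ℕ) : poch a (n + 1) = a * poch (a + 1) n := by
  rw [add_comm, poch_add]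
  simp [poch]

lemma poch_ne_zero {a : ℝ} (ha : ∀ i : ℕ, a + i ≠ 0) (n : ℕ) : poch a n ≠ 0 :=
  prod_ne_zero_iff.2 fun i _ => ha i

lemma abs_poch_le_poch {a b : ℝ} (h : |a| ≤ b) (n : ℕ) : |poch a n| ≤ poch b n := by
  rw [poch, abs_prod]
  refine prod_le_prod (fun i _ => abs_nonneg _) fun i _ => (abs_add_le _ _).trans ?_
  rw [Nat.abs_cast]
  gcongr

lemma poch_mul_mul (a : ℝ) {m : ℕ} (hm : m ≠ 0) (n : ℕ) :
    poch (m * a) (m * n) = (m ^ m) ^ n * ∏ j ∈ range m, poch (a + j / m) n := by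
  induction n with
  | zero => simp [poch]
  | succ n ih =>
    have last_block : poch (m * a + (m * n : ℕ)) m = m ^ m * ∏ j ∈ range m, (a + j / m + n) := by
      rw [poch, ← card_range m, ← prod_const, card_range, ← prod_mul_distrib]
      refine prod_congr rfl fun j _ => ?_
      push_cast
      field_simp
      ring
    simp only [Nat.mul_succ, poch_add, ih, last_block, poch_succ, prod_mul_distrib, pow_succ]
    ring

lemma poch_two_mul (a : ℝ) (n : ℕ) :
    poch (2 * a) (2 * n) = 4 ^ n * (poch a n * poch (a + 1 / 2) n) := by
  convert poch_mul_mul a two_ne_zero n using 2 <;> norm_num [prod_range_succ]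

lemma poch_three_mul (a : ℝ) (n : ℕ) :
    poch (3 * a) (3 * n) = 27 ^ n * (poch a n * poch (a + 1 / 3) n * poch (a + 2 / 3) n) := by
  convert poch_mul_mul a three_ne_zero n using 2 <;> norm_num [prod_range_succ]

lemma exists_polynomial_eval_eq_poch (c : ℝ) (n : ℕ) :
    ∃ P : ℝ[X], ∀ r, P.eval r = poch (r + c) n :=
  ⟨∏ i ∈ range n, (X + C c + C (i : ℝ)), fun r => by
    simp only [poch, eval_prod, eval_add, eval_X, eval_C]⟩

end Pochhammer

section Raney

/-- The Raney (or Fuss–Catalan) number `Aₙ(p, r) = r / (p n + r) * binom (p n + r) n`, written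
without the division by `p n + r` so that it is a polynomial in `p` and `r`. -/
noncomputable def raney (p r : ℝ) : ℕ → ℝ
  | 0 => 1
  | n + 1 => r * poch (r + ((p - 1) * (n + 1) + 1)) n / (n + 1).factorial

lemma raney_zero_right (p r : ℝ) : raney p r 0 = 1 := rfl

lemma raney_zero_succ (p : ℝ) (n : ℕ) : raney p 0 (n + 1) = 0 := by simp [raney]

lemma raney_add_one_succ (p r : ℝ) (n : ℕ) :
    raney p (r + 1) (n + 1) = raney p r (n + 1) + raney p (r + p) n := by
  cases n with
  | zero => simp [raney, poch]
  | succ n =>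
    simp only [raney]
    have left_end := poch_succ' (r + ((p - 1) * ((n + 1 : ℕ) + 1) + 1)) n
    have right_end := poch_succ (r + 1 + ((p - 1) * ((n + 1 : ℕ) + 1) + 1)) n
    have common : r + p + ((p - 1) * (n + 1) + 1)
        = r + ((p - 1) * ((n + 1 : ℕ) + 1) + 1) + 1 := by push_cast; ring
    rw [left_end, right_end, common, Nat.factorial_succ (n + 1), add_right_comm r 1]
    push_cast
    field_simp
    ring

lemma raney_one_succ (p : ℝ) (n : ℕ) : raney p 1 (n + 1) = raney p p n := by
  simpa [raney_zero_succ] using raney_add_one_succ p 0 n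

lemma exists_polynomial_eval_eq_raney (p : ℝ) (n : ℕ) :
    ∃ P : ℝ[X], ∀ r, P.eval r = raney p r n := by
  cases n with
  | zero => exact ⟨1, fun r => eval_one⟩
  | succ n =>
    obtain ⟨Q, hQ⟩ := exists_polynomial_eval_eq_poch ((p - 1) * (n + 1) + 1) n
    exact ⟨X * Q * C ((n + 1).factorial : ℝ)⁻¹, fun r => by
      simp only [raney, eval_mul, eval_X, eval_C, hQ, div_eq_mul_inv]⟩

lemma sum_antidiagonal_raney_add_one (p r s : ℝ) (n : ℕ) :
    ∑ q ∈ antidiagonal (n + 1), raney p (r + 1) q.1 * raney p s q.2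
      = ∑ q ∈ antidiagonal (n + 1), raney p r q.1 * raney p s q.2
        + ∑ q ∈ antidiagonal n, raney p (r + p) q.1 * raney p s q.2 := by
  simp only [Nat.sum_antidiagonal_succ, raney_add_one_succ, raney_zero_right, add_mul,
    sum_add_distrib, add_assoc]

theorem sum_antidiagonal_raney (p r s : ℝ) (n : ℕ) :
    ∑ q ∈ antidiagonal n, raney p r q.1 * raney p s q.2 = raney p (r + s) n := by
  induction n generalizing r s with
  | zero => simp [raney]
  | succ n ih =>
    have on_naturals (k : ℕ) :
        ∑ q ∈ antidiagonal (n + 1), raney p k q.1 * raney p s q.2 = raney p (k + s) (n + 1) := by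
      induction k with
      | zero => simp [Nat.sum_antidiagonal_succ, raney_zero_succ, raney_zero_right]
      | succ k ihk =>
        rw [Nat.cast_succ, sum_antidiagonal_raney_add_one, ihk, ih, add_right_comm (k : ℝ) 1,
          raney_add_one_succ, add_right_comm (k : ℝ) p]
    choose P hP using exists_polynomial_eval_eq_raney p
    have polynomials_eq :
        ∑ q ∈ antidiagonal (n + 1), P q.1 * C (raney p s q.2) = (P (n + 1)).comp (X + C s) := by
      refine eq_of_infinite_eval_eq _ _
        ((Set.infinite_range_of_injective (Nat.cast_injective (R := ℝ))).mono ?_)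
      rintro _ ⟨k, rfl⟩
      simpa [eval_finsetSum, hP] using on_naturals k
    simpa [eval_finsetSum, hP] using congrArg (eval r) polynomials_eq

lemma sum_antidiagonal_raney_mul_pow (p r s z : ℝ) (n : ℕ) :
    ∑ q ∈ antidiagonal n, raney p r q.1 * z ^ q.1 * (raney p s q.2 * z ^ q.2)
      = raney p (r + s) n * z ^ n := by
  rw [← sum_antidiagonal_raney, sum_mul]
  refine sum_congr rfl fun q hq => ?_
  rw [← mem_antidiagonal.1 hq, pow_add]
  ring

lemma abs_raney_le_raney {p r s : ℝ} (hp : 1 ≤ p) (h : |r| ≤ s) (n : ℕ) :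
    |raney p r n| ≤ raney p s n := by
  cases n with
  | zero => simp [raney]
  | succ n =>
    have hp' : 0 ≤ (p - 1) * (n + 1) + 1 := by
      have := sub_nonneg.2 hp
      positivity
    have hpoch : |poch (r + ((p - 1) * (n + 1) + 1)) n| ≤ poch (s + ((p - 1) * (n + 1) + 1)) n :=
      abs_poch_le_poch ((abs_add_le _ _).trans (by rw [abs_of_nonneg hp']; gcongr)) n
    simp only [raney, abs_div, abs_mul, Nat.abs_cast]
    have := (abs_nonneg r).trans h
    gcongr

lemma raney_nonneg {p r : ℝ} (hp : 1 ≤ p) (hr : 0 ≤ r) (n : ℕ) : 0 ≤ raney p r n :=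
  (abs_nonneg _).trans (abs_raney_le_raney hp (abs_of_nonneg hr).le n)

lemma raney_mul_poch (k : ℕ) (r : ℝ) (n : ℕ) :
    raney (k + 1) r n * (poch (r + 1) (k * n) * n.factorial) = poch r ((k + 1) * n) := by
  cases n with
  | zero => simp [raney, poch]
  | succ n =>
    have hfac : ((n + 1).factorial : ℝ) ≠ 0 := Nat.cast_ne_zero.2 (Nat.factorial_ne_zero _)
    rw [show (k + 1) * (n + 1) = (k * (n + 1) + n) + 1 by ring, poch_succ', poch_add, raney,
      show r + 1 + (k * (n + 1) : ℕ) = r + ((k + 1 - 1 : ℝ) * (n + 1) + 1) by push_cast; ring]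
    field_simp

lemma raney_three_eq_hypergeom_coeff {a : ℝ} (ha : ∀ i : ℕ, 3 * a + 1 + i ≠ 0) (n : ℕ) :
    raney 3 (3 * a) n * (4 / 27) ^ n
      = poch a n * poch (a + 1 / 3) n * poch (a + 2 / 3) n
        / (poch ((3 * a + 1) / 2) n * poch ((3 * a + 2) / 2) n * n.factorial) := by
  have hden₁ : poch ((3 * a + 1) / 2) n ≠ 0 := poch_ne_zero (fun i h => ha (2 * i) (by
    push_cast; linear_combination 2 * h)) n
  have hden₂ : poch ((3 * a + 2) / 2) n ≠ 0 := poch_ne_zero (fun i h => ha (2 * i + 1) (by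
    push_cast; linear_combination 2 * h)) n
  have hnum : raney 3 (3 * a) n * (poch (3 * a + 1) (2 * n) * n.factorial)
      = poch (3 * a) (3 * n) := by
    convert raney_mul_poch 2 (3 * a) n using 2
    norm_num
  have hdouble := poch_two_mul ((3 * a + 1) / 2) n
  rw [show 2 * ((3 * a + 1) / 2) = 3 * a + 1 by ring,
    show (3 * a + 1) / 2 + 1 / 2 = (3 * a + 2) / 2 by ring] at hdouble
  rw [poch_three_mul, hdouble] at hnum
  rw [div_pow, eq_div_iff (by positivity), mul_div_assoc', div_mul_eq_mul_div,
    div_eq_iff (by positivity)]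
  linear_combination hnum

end Raney

section GeneratingFunction

lemma eq_one_rpow_of_map_add_eq_mul {G : ℝ → ℝ} (hcont : Continuous G) (hzero : G 0 = 1)
    (hadd : ∀ r s, G (r + s) = G r * G s) (r : ℝ) : G r = G 1 ^ r := by
  have hne (t : ℝ) : G t ≠ 0 := fun ht => by simpa [ht, hzero] using hadd t (-t)
  have hpos (t : ℝ) : 0 < G t := by
    rw [← add_halves t, hadd]
    exact mul_self_pos.2 (hne _)
  let logG : ℝ →+ ℝ :=
    { toFun := fun t => log (G t)
      map_zero' := by simp [hzero]
      map_add' := fun s t => by rw [hadd, log_mul (hne s) (hne t)] }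
  have hlog : log (G r) = r * log (G 1) := by
    simpa [logG] using map_real_smul logG (hcont.log hne) r 1
  rw [rpow_def_of_pos (hpos 1), mul_comm, ← hlog, exp_log (hpos r)]

variable {p z : ℝ}

lemma summable_raney_natCast (hz : Summable fun n => raney p 1 n * |z| ^ n) (k : ℕ) :
    Summable fun n => raney p k n * |z| ^ n := by
  induction k with
  | zero =>
    refine summable_of_ne_finset_zero (s := {0}) fun n hn => ?_
    obtain ⟨m, rfl⟩ := Nat.exists_eq_succ_of_ne_zero (notMem_singleton.1 hn)
    simp [raney_zero_succ]
  | succ k ih =>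
    have := (summable_norm_sum_mul_antidiagonal_of_summable_norm ih.norm hz.norm).of_norm
    simpa only [sum_antidiagonal_raney_mul_pow, ← Nat.cast_succ] using this

lemma norm_raney_mul_pow_le (hp : 1 ≤ p) {r s : ℝ} (h : |r| ≤ s) (n : ℕ) :
    ‖raney p r n * z ^ n‖ ≤ raney p s n * |z| ^ n := by
  rw [norm_mul, norm_pow, norm_eq_abs, norm_eq_abs]
  gcongr
  exact abs_raney_le_raney hp h n

lemma summable_norm_raney (hp : 1 ≤ p) (hz : Summable fun n => raney p 1 n * |z| ^ n) (r : ℝ) :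
    Summable fun n => ‖raney p r n * z ^ n‖ := by
  obtain ⟨k, hk⟩ := exists_nat_ge |r|
  exact (summable_raney_natCast hz k).of_nonneg_of_le (fun _ => norm_nonneg _)
    (norm_raney_mul_pow_le hp hk)

lemma continuous_raney (p : ℝ) (n : ℕ) : Continuous fun r => raney p r n := by
  obtain ⟨P, hP⟩ := exists_polynomial_eval_eq_raney p n
  simpa only [hP] using P.continuous

lemma continuous_tsum_raney (hp : 1 ≤ p) (hz : Summable fun n => raney p 1 n * |z| ^ n) :
    Continuous fun r => ∑' n, raney p r n * z ^ n := by
  refine continuous_iff_continuousAt.2 fun r => ?_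
  obtain ⟨k, hk⟩ := exists_nat_gt |r|
  have hcont : ContinuousOn (fun r => ∑' n, raney p r n * z ^ n) (Set.Icc (-k : ℝ) k) :=
    continuousOn_tsum (fun n => ((continuous_raney p n).mul_const _).continuousOn)
      (summable_raney_natCast hz k) fun n s hs => norm_raney_mul_pow_le hp (abs_le.2 hs) n
  exact hcont.continuousAt (Icc_mem_nhds (abs_lt.1 hk).1 (abs_lt.1 hk).2)

theorem tsum_raney_eq_rpow (hp : 1 ≤ p) (hz : Summable fun n => raney p 1 n * |z| ^ n) (r : ℝ) :
    ∑' n, raney p r n * z ^ n = (∑' n, raney p 1 n * z ^ n) ^ r := by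
  refine eq_one_rpow_of_map_add_eq_mul (G := fun r => ∑' n, raney p r n * z ^ n)
    (continuous_tsum_raney hp hz) ?_ (fun r s => ?_) r
  · rw [tsum_eq_single 0 fun n hn => ?_]
    · simp [raney_zero_right]
    · obtain ⟨m, rfl⟩ := Nat.exists_eq_succ_of_ne_zero hn
      simp [raney_zero_succ]
  · simp only [tsum_mul_tsum_eq_tsum_sum_antidiagonal_of_summable_norm
      (summable_norm_raney hp hz r) (summable_norm_raney hp hz s), sum_antidiagonal_raney_mul_pow]

theorem tsum_raney_one_eq (hp : 1 ≤ p) (hz : Summable fun n => raney p 1 n * |z| ^ n) :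
    ∑' n, raney p 1 n * z ^ n = 1 + z * (∑' n, raney p 1 n * z ^ n) ^ p := by
  rw [← tsum_raney_eq_rpow hp hz, (summable_norm_raney hp hz 1).of_norm.tsum_eq_zero_add,
    ← tsum_mul_left]
  simp only [raney_zero_right, raney_one_succ, pow_zero, mul_one, pow_succ]
  congr 2 with n
  ring

end GeneratingFunction

section LeastRoot

lemma sum_range_sum_antidiagonal_le {R : Type*} [Semiring R] [PartialOrder R] [IsOrderedRing R]
    {f g : ℕ → R} (hf : ∀ n, 0 ≤ f n) (hg : ∀ n, 0 ≤ g n) (N : ℕ) :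
    ∑ n ∈ range N, ∑ q ∈ antidiagonal n, f q.1 * g q.2
      ≤ (∑ n ∈ range N, f n) * ∑ n ∈ range N, g n := by
  simp only [Nat.sum_antidiagonal_eq_sum_range_succ fun i j => f i * g j]
  rw [sum_range_diag_flip N fun i j => f i * g j, sum_mul_sum]
  gcongr with i
  · exact fun _ _ _ => mul_nonneg (hf _) (hg _)
  · exact Nat.sub_le N i

lemma sum_range_raney_natCast_le {p z : ℝ} (hp : 1 ≤ p) (hz : 0 ≤ z) (k N : ℕ) :
    ∑ n ∈ range N, raney p k n * z ^ n ≤ (∑ n ∈ range N, raney p 1 n * z ^ n) ^ k := by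
  have hterm {r : ℝ} (hr : 0 ≤ r) (n : ℕ) : 0 ≤ raney p r n * z ^ n :=
    mul_nonneg (raney_nonneg hp hr n) (pow_nonneg hz n)
  induction k with
  | zero => cases N <;> simp [sum_range_succ', raney_zero_succ, raney_zero_right]
  | succ k ih =>
    simp only [Nat.cast_succ, ← sum_antidiagonal_raney_mul_pow]
    refine (sum_range_sum_antidiagonal_le (hterm k.cast_nonneg) (hterm zero_le_one) N).trans ?_
    rw [pow_succ]
    gcongr
    exact sum_nonneg fun n _ => hterm zero_le_one n

variable {m : ℕ} {z B : ℝ}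

lemma sum_range_raney_one_le (hm : 1 ≤ m) (hz : 0 ≤ z) (hB : 0 ≤ B) (hfix : 1 + z * B ^ m ≤ B)
    (N : ℕ) : ∑ n ∈ range N, raney m 1 n * z ^ n ≤ B := by
  have hm' : (1 : ℝ) ≤ m := Nat.one_le_cast.2 hm
  induction N with
  | zero => simpa using hB
  | succ N ih =>
    calc ∑ n ∈ range (N + 1), raney m 1 n * z ^ n
        = 1 + z * ∑ n ∈ range N, raney m m n * z ^ n := by
          rw [sum_range_succ', mul_sum, add_comm]
          simp only [raney_zero_right, raney_one_succ, pow_zero, mul_one, pow_succ]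
          congr 2 with n
          ring
      _ ≤ 1 + z * (∑ n ∈ range N, raney m 1 n * z ^ n) ^ m := by
          gcongr
          exact sum_range_raney_natCast_le hm' hz m N
      _ ≤ 1 + z * B ^ m := by
          gcongr
          exact sum_nonneg fun n _ =>
            mul_nonneg (raney_nonneg hm' zero_le_one n) (pow_nonneg hz n)
      _ ≤ B := hfix

lemma summable_raney_one (hm : 1 ≤ m) (hz : 0 ≤ z) (hB : 0 ≤ B) (hfix : 1 + z * B ^ m ≤ B) :
    Summable fun n => raney m 1 n * z ^ n :=
  summable_of_sum_range_le
    (fun n => mul_nonneg (raney_nonneg (Nat.one_le_cast.2 hm) zero_le_one n) (pow_nonneg hz n))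
    (sum_range_raney_one_le hm hz hB hfix)

/-- The hypothesis `hcrit` says that `x ↦ 1 + z * x ^ m` has slope at most `1` at its fixed point
`B`; by convexity there is then no smaller fixed point. -/
lemma eq_of_fixedPoint_le {T : ℝ} (hm : 1 < m) (hz : 0 ≤ z) (hT : 0 ≤ T) (hTB : T ≤ B)
    (hfixT : T = 1 + z * T ^ m) (hfixB : B = 1 + z * B ^ m) (hcrit : m * (z * B ^ m) ≤ B) :
    T = B := by
  by_contra hne
  have hlt : T < B := lt_of_le_of_ne hTB hne
  have hB : 0 < B := hT.trans_lt hlt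
  have hzpos : 0 < z := hz.lt_of_ne' fun h => hne (by rw [hfixT, hfixB, h, zero_mul, zero_mul])
  have bernoulli : 1 + m * (T / B - 1) < (T / B) ^ m := by
    have h := one_add_mul_self_lt_rpow_one_add (s := T / B - 1) (p := m)
      (by linarith [div_nonneg hT hB.le]) (sub_ne_zero.2 ((div_lt_one hB).2 hlt).ne)
      (Nat.one_lt_cast.2 hm)
    rwa [add_sub_cancel, rpow_natCast] at h
  have : z * B ^ m + (T - B) < z * T ^ m :=
    calc z * B ^ m + (T - B) = z * B ^ m + B * (T / B - 1) := by field_simp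
      _ ≤ z * B ^ m + m * (z * B ^ m) * (T / B - 1) := by
          have : T / B - 1 ≤ 0 := sub_nonpos.2 ((div_lt_one hB).2 hlt).le
          linarith [mul_le_mul_of_nonpos_right hcrit this]
      _ = z * B ^ m * (1 + m * (T / B - 1)) := by ring
      _ < z * B ^ m * (T / B) ^ m := by gcongr
      _ = z * T ^ m := by rw [div_pow]; field_simp
  linarith

theorem hasSum_raney_rpow (hm : 1 < m) (hz : 0 ≤ z) (hB : 0 ≤ B) (hfix : B = 1 + z * B ^ m)
    (hcrit : m * (z * B ^ m) ≤ B) (r : ℝ) : HasSum (fun n => raney m r n * z ^ n) (B ^ r) := by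
  have hm' : (1 : ℝ) ≤ m := Nat.one_le_cast.2 hm.le
  have hsum := summable_raney_one hm.le hz hB hfix.ge
  have hsum_abs : Summable fun n => raney m 1 n * |z| ^ n := by rwa [abs_of_nonneg hz]
  have hterm (n : ℕ) : 0 ≤ raney m 1 n * z ^ n :=
    mul_nonneg (raney_nonneg hm' zero_le_one n) (pow_nonneg hz n)
  have hroot : ∑' n, raney m 1 n * z ^ n = B :=
    eq_of_fixedPoint_le hm hz (tsum_nonneg hterm)
      (hsum.tsum_le_of_sum_range_le (sum_range_raney_one_le hm.le hz hB hfix.ge))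
      (by simpa only [rpow_natCast] using tsum_raney_one_eq hm' hsum_abs) hfix hcrit
  rw [← hroot, ← tsum_raney_eq_rpow hm' hsum_abs]
  exact (summable_norm_raney hm' hsum_abs r).of_norm.hasSum

end LeastRoot

section Trigonometry

lemma two_le_three_mul_cos_sq_sub_sin_sq {α : ℝ} (hα : |α| ≤ π / 6) :
    2 ≤ 3 * cos α ^ 2 - sin α ^ 2 := by
  have hcos : 1 / 2 ≤ cos (2 * α) := by
    rw [← cos_pi_div_three, ← cos_abs (2 * α), abs_mul, abs_two]
    exact cos_le_cos_of_nonneg_of_le_pi (by positivity) (by linarith [pi_pos]) (by linarith)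
  rw [sin_sq]
  linarith [cos_two_mul α]

lemma three_div_eq_one_add_sin_three_mul {α : ℝ} (h : 3 * cos α ^ 2 - sin α ^ 2 ≠ 0) :
    3 / (3 * cos α ^ 2 - sin α ^ 2)
      = 1 + 4 / 27 * sin (3 * α) ^ 2 * (3 / (3 * cos α ^ 2 - sin α ^ 2)) ^ 3 := by
  have hsin : sin (3 * α) = sin α * (3 * cos α ^ 2 - sin α ^ 2) := by
    rw [sin_three_mul, cos_sq']
    ring
  rw [hsin]
  field_simp
  rw [cos_sq']
  ring

lemma abs_arcsin_div_three_le (x : ℝ) : |arcsin x / 3| ≤ π / 6 :=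
  abs_le.2 ⟨by linarith [neg_pi_div_two_le_arcsin x], by linarith [arcsin_le_pi_div_two x]⟩

lemma sin_three_mul_arcsin_sqrt_sq {u : ℝ} (hu0 : 0 ≤ u) (hu : u ≤ 1) :
    sin (3 * (arcsin √u / 3)) ^ 2 = u := by
  rw [mul_div_cancel₀ _ three_ne_zero,
    sin_arcsin (by linarith [sqrt_nonneg u]) (sqrt_le_one.2 hu), sq_sqrt hu0]

end Trigonometry

theorem hypergeom_identity_general {a u : ℝ} (ha : ∀ i : ℕ, 3 * a + 1 + i ≠ 0) (hu0 : 0 ≤ u)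
    (hu : u ≤ 1) {α : ℝ} (hα : α = arcsin √u / 3) :
    HasSum (fun n : ℕ =>
        poch a n * poch (a + 1 / 3) n * poch (a + 2 / 3) n
          / (poch ((3 * a + 1) / 2) n * poch ((3 * a + 2) / 2) n * n.factorial) * u ^ n)
      ((3 / (3 * cos α ^ 2 - sin α ^ 2)) ^ (3 * a)) := by
  have hD : 2 ≤ 3 * cos α ^ 2 - sin α ^ 2 :=
    two_le_three_mul_cos_sq_sub_sin_sq (hα ▸ abs_arcsin_div_three_le _)
  have hfix := three_div_eq_one_add_sin_three_mul (α := α) (by linarith)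
  have hsin : sin (3 * α) ^ 2 = u := hα ▸ sin_three_mul_arcsin_sqrt_sq hu0 hu
  rw [hsin] at hfix
  set B := 3 / (3 * cos α ^ 2 - sin α ^ 2)
  have hB0 : 0 ≤ B := div_nonneg zero_le_three (by linarith)
  have hB : B ≤ 3 / 2 := div_le_div_of_nonneg_left zero_le_three two_pos hD
  have hsum := hasSum_raney_rpow (m := 3) (by norm_num) (by positivity) hB0 hfix
    (by push_cast; linarith) (3 * a)
  simpa only [Nat.cast_ofNat, mul_pow, ← mul_assoc, raney_three_eq_hypergeom_coeff ha] using hsum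

theorem hypergeom_identity (a u : ℝ) (ha : 0 < a) (hu0 : 0 ≤ u) (hu : u < 1) :
    ∀ α : ℝ, α = Real.arcsin (Real.sqrt u) / 3 →
      HasSum (fun n : ℕ =>
          poch a n * poch (a + 1/3) n * poch (a + 2/3) n
            / (poch ((3 * a + 1) / 2) n * poch ((3 * a + 2) / 2) n * (n.factorial : ℝ)) * u ^ n)
        ((3 / (3 * Real.cos α ^ 2 - Real.sin α ^ 2)) ^ (3 * a)) :=
  fun _ hα => hypergeom_identity_general (fun _ => by positivity) hu0 hu.le hα
end

section
/- Let u be a real number with 0 ≤ u < 1 and set β = (1/3)·arcsin(√u). Then: (i) ∑_{n≥0} [(−2/3)_n · (−1/3)_n] / [(−1/2)_n · n!] · u^n = (2/3)·cos(2β) + (1/3)·cos(4β); and (ii) if moreover 0 < u, then ∑_{n≥0} [(5/6)_n · (7/6)_n] / [(5/2)_n · n!] · u^n = 27 cos β · sin³β / sin³(3β). -/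
open Real

/-!
Under `x = sin θ ^ 2` Gauss's hypergeometric equation with `c = 1 / 2` and `a + b = 0` becomes the
harmonic oscillator, so `₂F₁ a (-a) (1 / 2) (sin θ ^ 2) = cos (2 * a * θ)`. The same holds for
`sin θ * ₂F₁ (1 / 2 + a) (1 / 2 - a) (3 / 2) (sin θ ^ 2)`, which is a multiple of `sin (2 * a * θ)`.
Contiguous relations express the functions with `c = -1 / 2` and `c = 5 / 2` through two
consecutive members of these families. The two identities are the case `a = 1 / 6`, `θ = 3 * β`.
-/

section Coefficients

variable {𝕂 : Type*}

section CommSemiring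

variable [CommSemiring 𝕂]

lemma ascPochhammer_succ_eval_left (n : ℕ) (a : 𝕂) :
    (ascPochhammer 𝕂 (n + 1)).eval a = a * (ascPochhammer 𝕂 n).eval (a + 1) := by
  simp [ascPochhammer_succ_left]

lemma mul_ascPochhammer_eval_add_one (n : ℕ) (a : 𝕂) :
    a * (ascPochhammer 𝕂 n).eval (a + 1) = (ascPochhammer 𝕂 n).eval a * (a + n) := by
  rw [← ascPochhammer_succ_eval_left, ascPochhammer_succ_eval]

end CommSemiring

variable [Field 𝕂]

lemma ordinaryHypergeometricCoefficient_symm (a b c : 𝕂) (n : ℕ) :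
    ordinaryHypergeometricCoefficient a b c n = ordinaryHypergeometricCoefficient b a c n := by
  simp only [ordinaryHypergeometricCoefficient]
  ring

lemma mul_ordinaryHypergeometricCoefficient_add_one_left (a b c : 𝕂) (n : ℕ) :
    a * ordinaryHypergeometricCoefficient (a + 1) b c n =
      (a + n) * ordinaryHypergeometricCoefficient a b c n := by
  simp only [ordinaryHypergeometricCoefficient]
  linear_combination ((n.factorial : 𝕂)⁻¹ * (ascPochhammer 𝕂 n).eval b *
    ((ascPochhammer 𝕂 n).eval c)⁻¹) * mul_ascPochhammer_eval_add_one n a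

lemma mul_ordinaryHypergeometricCoefficient_add_one_right (a b : 𝕂) {c : 𝕂} {n : ℕ}
    (hc : c ≠ 0) (hcn : c + n ≠ 0) :
    (c + n) * ordinaryHypergeometricCoefficient a b (c + 1) n =
      c * ordinaryHypergeometricCoefficient a b c n := by
  have h : (c + n) * ((ascPochhammer 𝕂 n).eval (c + 1))⁻¹ =
      c * ((ascPochhammer 𝕂 n).eval c)⁻¹ := by
    have h := congr_arg (·⁻¹) (mul_ascPochhammer_eval_add_one n c)
    simp only [mul_inv] at h
    field_simp at h ⊢
    linear_combination h
  simp only [ordinaryHypergeometricCoefficient]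
  linear_combination ((n.factorial : 𝕂)⁻¹ * (ascPochhammer 𝕂 n).eval a *
    (ascPochhammer 𝕂 n).eval b) * h

lemma ordinaryHypergeometricCoefficient_zero (a b c : 𝕂) :
    ordinaryHypergeometricCoefficient a b c 0 = 1 := by
  simp [ordinaryHypergeometricCoefficient]

variable [CharZero 𝕂]

lemma ordinaryHypergeometricCoefficient_succ_eq_add_one (a b c : 𝕂) (n : ℕ) :
    (n + 1) * ordinaryHypergeometricCoefficient a b c (n + 1) =
      a * b / c * ordinaryHypergeometricCoefficient (a + 1) (b + 1) (c + 1) n := by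
  have hn : (n + 1 : 𝕂) ≠ 0 := n.cast_add_one_ne_zero
  simp only [ordinaryHypergeometricCoefficient, ascPochhammer_succ_eval_left, Nat.factorial_succ,
    Nat.cast_mul, Nat.cast_add_one, mul_inv]
  field_simp

lemma ordinaryHypergeometricCoefficient_succ (a b : 𝕂) {c : 𝕂} {n : ℕ} (hc : c + n ≠ 0) :
    (n + 1) * (c + n) * ordinaryHypergeometricCoefficient a b c (n + 1) =
      (a + n) * (b + n) * ordinaryHypergeometricCoefficient a b c n := by
  have hn : (n + 1 : 𝕂) ≠ 0 := n.cast_add_one_ne_zero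
  simp only [ordinaryHypergeometricCoefficient, ascPochhammer_succ_eval, Nat.factorial_succ,
    Nat.cast_mul, Nat.cast_add_one, mul_inv]
  field_simp

lemma ordinaryHypergeometricCoefficient_add_one_sub_add_one (a b c : 𝕂) (n : ℕ) :
    ordinaryHypergeometricCoefficient (a + 1) b c (n + 1) -
        ordinaryHypergeometricCoefficient a (b + 1) c (n + 1) =
      (b - a) / c * ordinaryHypergeometricCoefficient (a + 1) (b + 1) (c + 1) n := by
  have ha := mul_ordinaryHypergeometricCoefficient_add_one_left (a + 1) (b + 1) (c + 1) n
  have hb := mul_ordinaryHypergeometricCoefficient_add_one_left (b + 1) (a + 1) (c + 1) n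
  rw [ordinaryHypergeometricCoefficient_symm, ordinaryHypergeometricCoefficient_symm (b + 1)] at hb
  refine mul_left_cancel₀ (n.cast_add_one_ne_zero : (n + 1 : 𝕂) ≠ 0) ?_
  rw [mul_sub, ordinaryHypergeometricCoefficient_succ_eq_add_one,
    ordinaryHypergeometricCoefficient_succ_eq_add_one]
  linear_combination b / c * ha - a / c * hb

end Coefficients

section Algebra

variable {𝕂 𝔸 : Type*} [Field 𝕂] [Ring 𝔸] [Algebra 𝕂 𝔸] [TopologicalSpace 𝔸] [IsTopologicalRing 𝔸]

lemma ordinaryHypergeometric_symm (a b c : 𝕂) : (₂F₁ a b c : 𝔸 → 𝔸) = ₂F₁ b a c := by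
  ext x
  rw [ordinaryHypergeometric, ordinaryHypergeometric, ordinaryHypergeometricSeries_symm]

lemma ordinaryHypergeometric_zero_left (b c : 𝕂) (x : 𝔸) : ₂F₁ 0 b c x = 1 := by
  rw [ordinaryHypergeometric_eq_tsum]
  refine (tsum_eq_single 0 fun n hn ↦ ?_).trans (by simp)
  simp [ascPochhammer_ne_zero_eval_zero 𝕂 hn]

end Algebra

section Hypergeometric

variable {𝕂 : Type*} [RCLike 𝕂]

lemma one_le_radius_ordinaryHypergeometricSeries (a b c : 𝕂) :
    1 ≤ (ordinaryHypergeometricSeries 𝕂 a b c).radius := by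
  by_cases! habc : ∀ k : ℕ, (k : 𝕂) ≠ -a ∧ (k : 𝕂) ≠ -b ∧ (k : 𝕂) ≠ -c
  · exact (ordinaryHypergeometricSeries_radius_eq_one 𝕂 a b c habc).ge
  · obtain ⟨k, hk⟩ := habc
    by_cases ha : (k : 𝕂) = -a
    · obtain rfl : a = -k := by rw [ha, neg_neg]
      simp [ordinaryHypergeometric_radius_top_of_neg_nat₁]
    by_cases hb : (k : 𝕂) = -b
    · obtain rfl : b = -k := by rw [hb, neg_neg]
      simp [ordinaryHypergeometric_radius_top_of_neg_nat₂]
    obtain rfl : c = -k := by rw [hk ha hb, neg_neg]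
    simp [ordinaryHypergeometric_radius_top_of_neg_nat₃]

variable {x : 𝕂}

lemma mem_eball_radius_ordinaryHypergeometricSeries (a b c : 𝕂) (hx : ‖x‖ < 1) :
    x ∈ Metric.eball 0 (ordinaryHypergeometricSeries 𝕂 a b c).radius := by
  refine Metric.eball_subset_eball (one_le_radius_ordinaryHypergeometricSeries a b c) ?_
  simpa [← ofReal_norm] using hx

lemma hasSum_ordinaryHypergeometric (a b c : 𝕂) (hx : ‖x‖ < 1) :
    HasSum (fun n ↦ ordinaryHypergeometricCoefficient a b c n * x ^ n) (₂F₁ a b c x) := by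
  refine ((ordinaryHypergeometricSeries 𝕂 a b c).hasSum
    (mem_eball_radius_ordinaryHypergeometricSeries a b c hx)).congr_fun fun n ↦ ?_
  rw [ordinaryHypergeometricSeries_apply_eq, smul_eq_mul]

lemma analyticAt_ordinaryHypergeometric (a b c : 𝕂) (hx : ‖x‖ < 1) :
    AnalyticAt 𝕂 (₂F₁ a b c) x :=
  ((ordinaryHypergeometricSeries 𝕂 a b c).hasFPowerSeriesOnBall
    (zero_lt_one.trans_le (one_le_radius_ordinaryHypergeometricSeries a b c))).analyticAt_of_mem
    (mem_eball_radius_ordinaryHypergeometricSeries a b c hx)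

lemma hasSum_deriv_ordinaryHypergeometric (a b c : 𝕂) (hx : ‖x‖ < 1) :
    HasSum (fun n : ℕ ↦ (n + 1) * ordinaryHypergeometricCoefficient a b c (n + 1) * x ^ n)
      (deriv (₂F₁ a b c) x) := by
  set p := ordinaryHypergeometricSeries 𝕂 a b c with hp
  have hmem := mem_eball_radius_ordinaryHypergeometricSeries a b c hx
  have hderiv : HasDerivAt (₂F₁ a b c) (p.derivSeries.sum x 1) x :=
    (p.hasFDerivAt_sum (by simpa using hmem)).hasDerivAt
  have hsum : HasSum (fun n ↦ p.derivSeries n (fun _ ↦ x) 1) (p.derivSeries.sum x 1) :=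
    (p.derivSeries.hasSum (Metric.eball_subset_eball p.radius_le_radius_derivSeries hmem)).mapL
      (ContinuousLinearMap.apply 𝕂 𝕂 (1 : 𝕂))
  rw [hderiv.deriv]
  refine hsum.congr_fun fun n ↦ ?_
  rw [p.derivSeries.apply_eq_pow_smul_coeff, smul_apply, p.derivSeries_coeff_one, hp,
    ordinaryHypergeometricSeries, FormalMultilinearSeries.coeff_ofScalars, nsmul_eq_mul,
    smul_eq_mul, Nat.cast_add_one, mul_comm]

lemma deriv_ordinaryHypergeometric (a b c : 𝕂) (hx : ‖x‖ < 1) :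
    deriv (₂F₁ a b c) x = a * b / c * ₂F₁ (a + 1) (b + 1) (c + 1) x := by
  refine (hasSum_deriv_ordinaryHypergeometric a b c hx).unique <|
    ((hasSum_ordinaryHypergeometric (a + 1) (b + 1) (c + 1) hx).mul_left
      (a * b / c)).congr_fun fun n ↦ ?_
  rw [ordinaryHypergeometricCoefficient_succ_eq_add_one, mul_assoc]

lemma deriv_deriv_ordinaryHypergeometric (a b c : 𝕂) (hx : ‖x‖ < 1) :
    deriv (deriv (₂F₁ a b c)) x = a * b / c * deriv (₂F₁ (a + 1) (b + 1) (c + 1)) x := by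
  have hball : ∀ᶠ y : 𝕂 in nhds x, ‖y‖ < 1 := continuous_norm.continuousAt.eventually_lt_const hx
  rw [Filter.EventuallyEq.deriv_eq (hball.mono fun y hy ↦ deriv_ordinaryHypergeometric a b c hy),
    deriv_const_mul_field]

lemma hasSum_mul_deriv_ordinaryHypergeometric (a b c : 𝕂) (hx : ‖x‖ < 1) :
    HasSum (fun n : ℕ ↦ n * ordinaryHypergeometricCoefficient a b c n * x ^ n)
      (x * deriv (₂F₁ a b c) x) := by
  rw [← hasSum_nat_add_iff' 1, Finset.sum_range_one, Nat.cast_zero, zero_mul, zero_mul, sub_zero]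
  refine ((hasSum_deriv_ordinaryHypergeometric a b c hx).mul_left x).congr_fun fun n ↦ ?_
  push_cast
  ring

lemma hasSum_mul_deriv_deriv_ordinaryHypergeometric (a b c : 𝕂) (hx : ‖x‖ < 1) :
    HasSum (fun n : ℕ ↦ n * (n + 1) * ordinaryHypergeometricCoefficient a b c (n + 1) * x ^ n)
      (x * deriv (deriv (₂F₁ a b c)) x) := by
  rw [deriv_deriv_ordinaryHypergeometric a b c hx, mul_left_comm]
  refine ((hasSum_mul_deriv_ordinaryHypergeometric (a + 1) (b + 1) (c + 1) hx).mul_left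
    (a * b / c)).congr_fun fun n ↦ ?_
  linear_combination n * x ^ n * ordinaryHypergeometricCoefficient_succ_eq_add_one a b c n

lemma hasSum_sq_mul_deriv_deriv_ordinaryHypergeometric (a b c : 𝕂) (hx : ‖x‖ < 1) :
    HasSum (fun n : ℕ ↦ n * (n - 1) * ordinaryHypergeometricCoefficient a b c n * x ^ n)
      (x ^ 2 * deriv (deriv (₂F₁ a b c)) x) := by
  rw [← hasSum_nat_add_iff' 1, Finset.sum_range_one, Nat.cast_zero, zero_mul, zero_mul, zero_mul,
    sub_zero, sq, mul_assoc]
  refine ((hasSum_mul_deriv_deriv_ordinaryHypergeometric a b c hx).mul_left x).congr_fun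
    fun n ↦ ?_
  push_cast
  ring

lemma ordinaryHypergeometric_ode (a b : 𝕂) {c : 𝕂} (hc : ∀ n : ℕ, c + n ≠ 0) (hx : ‖x‖ < 1) :
    x * (1 - x) * deriv (deriv (₂F₁ a b c)) x + (c - (a + b + 1) * x) * deriv (₂F₁ a b c) x =
      a * b * ₂F₁ a b c x := by
  have hF := (hasSum_ordinaryHypergeometric a b c hx).mul_left (a * b)
  have hF' := (hasSum_deriv_ordinaryHypergeometric a b c hx).mul_left c
  have hxF' := (hasSum_mul_deriv_ordinaryHypergeometric a b c hx).mul_left (a + b + 1)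
  have hxF'' := hasSum_mul_deriv_deriv_ordinaryHypergeometric a b c hx
  have hxxF'' := hasSum_sq_mul_deriv_deriv_ordinaryHypergeometric a b c hx
  have hzero := (((hxF''.sub hxxF'').add hF').sub (hxF'.add hF)).unique <|
    hasSum_zero.congr_fun fun n ↦ by
      linear_combination x ^ n * ordinaryHypergeometricCoefficient_succ a b (hc n)
  linear_combination hzero

lemma ordinaryHypergeometric_contiguous_left (a b : 𝕂) {c : 𝕂} (hc : ∀ n : ℕ, c + n ≠ 0)
    (hx : ‖x‖ < 1) :
    c * ₂F₁ a b c x = (c - a) * ₂F₁ a b (c + 1) x + a * ₂F₁ (a + 1) b (c + 1) x := by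
  refine ((hasSum_ordinaryHypergeometric a b c hx).mul_left c).unique <|
    (((hasSum_ordinaryHypergeometric a b (c + 1) hx).mul_left (c - a)).add
      ((hasSum_ordinaryHypergeometric (a + 1) b (c + 1) hx).mul_left a)).congr_fun fun n ↦ ?_
  have hc₀ : c ≠ 0 := by simpa using hc 0
  linear_combination -x ^ n * (mul_ordinaryHypergeometricCoefficient_add_one_right a b hc₀ (hc n) +
    mul_ordinaryHypergeometricCoefficient_add_one_left a b (c + 1) n)

lemma ordinaryHypergeometric_contiguous_right (a b : 𝕂) {c : 𝕂} (hc : ∀ n : ℕ, c + n ≠ 0)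
    (hx : ‖x‖ < 1) :
    c * ₂F₁ a b c x = (c - b) * ₂F₁ a b (c + 1) x + b * ₂F₁ a (b + 1) (c + 1) x := by
  simpa only [ordinaryHypergeometric_symm a] using ordinaryHypergeometric_contiguous_left b a hc hx

lemma ordinaryHypergeometric_add_one_sub_add_one (a b c : 𝕂) (hx : ‖x‖ < 1) :
    ₂F₁ (a + 1) b c x - ₂F₁ a (b + 1) c x =
      (b - a) / c * x * ₂F₁ (a + 1) (b + 1) (c + 1) x := by
  have hdiff := (hasSum_nat_add_iff' 1).2 <|
    (hasSum_ordinaryHypergeometric (a + 1) b c hx).sub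
      (hasSum_ordinaryHypergeometric a (b + 1) c hx)
  rw [Finset.sum_range_one, ordinaryHypergeometricCoefficient_zero,
    ordinaryHypergeometricCoefficient_zero, sub_self, sub_zero] at hdiff
  refine hdiff.unique <| ((hasSum_ordinaryHypergeometric (a + 1) (b + 1) (c + 1) hx).mul_left
    ((b - a) / c * x)).congr_fun fun n ↦ ?_
  linear_combination
    x ^ (n + 1) * ordinaryHypergeometricCoefficient_add_one_sub_add_one a b c n

end Hypergeometric

section Trigonometric

lemma mul_eq_cos_add_sin_of_harmonic {y y' : ℝ → ℝ} {ω : ℝ} {s : Set ℝ} (hs : Convex ℝ s)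
    (hy : ∀ t ∈ s, HasDerivWithinAt y (y' t) s t)
    (hy' : ∀ t ∈ s, HasDerivWithinAt y' (-ω ^ 2 * y t) s t) (h₀ : 0 ∈ s) {θ : ℝ} (hθ : θ ∈ s) :
    ω * y θ = ω * y 0 * cos (ω * θ) + y' 0 * sin (ω * θ) := by
  have hcos (t : ℝ) : HasDerivWithinAt (fun t ↦ cos (ω * t)) (-sin (ω * t) * ω) s t := by
    simpa using ((hasDerivWithinAt_id t s).const_mul ω).cos
  have hsin (t : ℝ) : HasDerivWithinAt (fun t ↦ sin (ω * t)) (cos (ω * t) * ω) s t := by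
    simpa using ((hasDerivWithinAt_id t s).const_mul ω).sin
  have hconst {f : ℝ → ℝ} (hf : ∀ t ∈ s, HasDerivWithinAt f 0 s t) : f θ = f 0 := by
    simpa [sub_eq_zero] using hs.norm_image_sub_le_of_norm_hasDerivWithin_le (C := 0) hf
      (by simp) h₀ hθ
  -- Rotating the phase vector `(ω * y, y')` back by the angle `ω * t` gives constants of motion.
  have hp : ω * y θ * cos (ω * θ) - y' θ * sin (ω * θ) = ω * y 0 := by
    have h := hconst (f := fun t ↦ ω * y t * cos (ω * t) - y' t * sin (ω * t)) fun t ht ↦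
      ((((hy t ht).const_mul ω).mul (hcos t)).sub ((hy' t ht).mul (hsin t))).congr_deriv (by ring)
    simpa using h
  have hq : ω * y θ * sin (ω * θ) + y' θ * cos (ω * θ) = y' 0 := by
    have h := hconst (f := fun t ↦ ω * y t * sin (ω * t) + y' t * cos (ω * t)) fun t ht ↦
      ((((hy t ht).const_mul ω).mul (hsin t)).add ((hy' t ht).mul (hcos t))).congr_deriv (by ring)
    simpa using h
  linear_combination cos (ω * θ) * hp + sin (ω * θ) * hq - ω * y θ * cos_sq_add_sin_sq (ω * θ)

lemma norm_sin_sq_lt_one {θ : ℝ} (hθ : θ ∈ Set.Ioo (-(π / 2)) (π / 2)) : ‖sin θ ^ 2‖ < 1 := by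
  rw [norm_of_nonneg (sq_nonneg _), sin_sq]
  linarith [pow_pos (cos_pos_of_mem_Ioo hθ) 2]

lemma hasDerivAt_comp_sin_sq {f : ℝ → ℝ} {θ : ℝ} (hf : DifferentiableAt ℝ f (sin θ ^ 2)) :
    HasDerivAt (fun t ↦ f (sin t ^ 2)) (deriv f (sin θ ^ 2) * (2 * sin θ * cos θ)) θ := by
  have hsq : HasDerivAt (fun t ↦ sin t ^ 2) (2 * sin θ * cos θ) θ := by
    simpa using (hasDerivAt_sin θ).fun_pow 2
  exact hf.hasDerivAt.comp θ hsq

lemma zero_mem_Ioo_neg_pi_div_two : (0 : ℝ) ∈ Set.Ioo (-(π / 2)) (π / 2) := by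
  constructor <;> linarith [pi_pos]

lemma ordinaryHypergeometric_one_half_sin_sq (a : ℝ) {θ : ℝ}
    (hθ : θ ∈ Set.Ioo (-(π / 2)) (π / 2)) :
    ₂F₁ a (-a) (1 / 2) (sin θ ^ 2) = cos (2 * a * θ) := by
  rcases eq_or_ne a 0 with rfl | ha
  · simp [ordinaryHypergeometric_zero_left]
  set F : ℝ → ℝ := ₂F₁ a (-a) (1 / 2)
  have hF {t} (ht : t ∈ Set.Ioo (-(π / 2)) (π / 2)) : AnalyticAt ℝ F (sin t ^ 2) :=
    analyticAt_ordinaryHypergeometric _ _ _ (norm_sin_sq_lt_one ht)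
  have hy : ∀ t ∈ Set.Ioo (-(π / 2)) (π / 2), HasDerivAt (fun t ↦ F (sin t ^ 2))
      (deriv F (sin t ^ 2) * (2 * sin t * cos t)) t := fun t ht ↦
    hasDerivAt_comp_sin_sq (hF ht).differentiableAt
  have hy' : ∀ t ∈ Set.Ioo (-(π / 2)) (π / 2),
      HasDerivAt (fun t ↦ deriv F (sin t ^ 2) * (2 * sin t * cos t))
        (-(2 * a) ^ 2 * F (sin t ^ 2)) t := fun t ht ↦ by
    refine ((hasDerivAt_comp_sin_sq (hF ht).deriv.differentiableAt).mul
      (((hasDerivAt_sin t).const_mul 2).mul (hasDerivAt_cos t))).congr_deriv ?_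
    have hode := ordinaryHypergeometric_ode a (-a) (c := 1 / 2) (fun n ↦ by positivity)
      (norm_sin_sq_lt_one ht)
    rw [← cos_sq'] at hode
    simp only [Pi.mul_apply]
    linear_combination 4 * hode + 2 * deriv F (sin t ^ 2) * cos_sq' t
  have h := mul_eq_cos_add_sin_of_harmonic (convex_Ioo _ _)
    (fun t ht ↦ (hy t ht).hasDerivWithinAt) (fun t ht ↦ (hy' t ht).hasDerivWithinAt)
    zero_mem_Ioo_neg_pi_div_two hθ
  simpa [F, ha] using h

lemma sin_mul_ordinaryHypergeometric_three_halves_sin_sq (a : ℝ) {θ : ℝ}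
    (hθ : θ ∈ Set.Ioo (-(π / 2)) (π / 2)) :
    2 * a * (sin θ * ₂F₁ (1 / 2 + a) (1 / 2 - a) (3 / 2) (sin θ ^ 2)) = sin (2 * a * θ) := by
  set F : ℝ → ℝ := ₂F₁ (1 / 2 + a) (1 / 2 - a) (3 / 2)
  have hF {t} (ht : t ∈ Set.Ioo (-(π / 2)) (π / 2)) : AnalyticAt ℝ F (sin t ^ 2) :=
    analyticAt_ordinaryHypergeometric _ _ _ (norm_sin_sq_lt_one ht)
  have hy : ∀ t ∈ Set.Ioo (-(π / 2)) (π / 2), HasDerivAt (fun t ↦ sin t * F (sin t ^ 2))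
      (cos t * (F (sin t ^ 2) + 2 * sin t ^ 2 * deriv F (sin t ^ 2))) t := fun t ht ↦ by
    refine ((hasDerivAt_sin t).mul
      (hasDerivAt_comp_sin_sq (hF ht).differentiableAt)).congr_deriv ?_
    ring
  have hy' : ∀ t ∈ Set.Ioo (-(π / 2)) (π / 2),
      HasDerivAt (fun t ↦ cos t * (F (sin t ^ 2) + 2 * sin t ^ 2 * deriv F (sin t ^ 2)))
        (-(2 * a) ^ 2 * (sin t * F (sin t ^ 2))) t := fun t ht ↦ by
    refine ((hasDerivAt_cos t).mul ((hasDerivAt_comp_sin_sq (hF ht).differentiableAt).add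
      ((((hasDerivAt_sin t).pow 2).const_mul 2).mul
        (hasDerivAt_comp_sin_sq (hF ht).deriv.differentiableAt)))).congr_deriv ?_
    have hode := ordinaryHypergeometric_ode (1 / 2 + a) (1 / 2 - a) (c := 3 / 2)
      (fun n ↦ by positivity) (norm_sin_sq_lt_one ht)
    rw [← cos_sq'] at hode
    simp only [Pi.add_apply, Pi.mul_apply, Pi.pow_apply]
    linear_combination 4 * sin t * hode + 6 * sin t * deriv F (sin t ^ 2) * cos_sq' t
  have h := mul_eq_cos_add_sin_of_harmonic (convex_Ioo _ _)
    (fun t ht ↦ (hy t ht).hasDerivWithinAt) (fun t ht ↦ (hy' t ht).hasDerivWithinAt)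
    zero_mem_Ioo_neg_pi_div_two hθ
  simpa [F] using h

lemma ordinaryHypergeometric_neg_one_half_sin_sq (a : ℝ) {θ : ℝ}
    (hθ : θ ∈ Set.Ioo (-(π / 2)) (π / 2)) :
    ₂F₁ (-1 / 2 - a) (-1 / 2 + a) (-1 / 2) (sin θ ^ 2) =
      (1 / 2 + a) * cos ((1 - 2 * a) * θ) + (1 / 2 - a) * cos ((1 + 2 * a) * θ) := by
  have hx := norm_sin_sq_lt_one hθ
  have hc (n : ℕ) : (-1 / 2 + n : ℝ) ≠ 0 := fun h ↦ by
    have hn : 2 * n = 1 := by exact_mod_cast (by linarith : (2 * n : ℝ) = 1)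
    lia
  have hcos₁ : ₂F₁ (-1 / 2 - a + 1) (-1 / 2 + a) (-1 / 2 + 1) (sin θ ^ 2) =
      cos ((1 - 2 * a) * θ) := by
    convert ordinaryHypergeometric_one_half_sin_sq (1 / 2 - a) hθ using 2 <;> ring
  have hcos₂ : ₂F₁ (-1 / 2 - a) (-1 / 2 + a + 1) (-1 / 2 + 1) (sin θ ^ 2) =
      cos ((1 + 2 * a) * θ) := by
    rw [← cos_neg]
    convert ordinaryHypergeometric_one_half_sin_sq (-1 / 2 - a) hθ using 2 <;> ring
  have hl := ordinaryHypergeometric_contiguous_left (-1 / 2 - a) (-1 / 2 + a) hc hx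
  have hr := ordinaryHypergeometric_contiguous_right (-1 / 2 - a) (-1 / 2 + a) hc hx
  rw [hcos₁] at hl
  rw [hcos₂] at hr
  linear_combination -hl - hr

lemma sin_cube_mul_ordinaryHypergeometric_five_halves_sin_sq (a : ℝ) {θ : ℝ}
    (hθ : θ ∈ Set.Ioo (-(π / 2)) (π / 2)) :
    4 / 3 * a * (1 - 4 * a ^ 2) * (sin θ ^ 3 * ₂F₁ (1 - a) (1 + a) (5 / 2) (sin θ ^ 2)) =
      (1 + 2 * a) * sin ((1 - 2 * a) * θ) - (1 - 2 * a) * sin ((1 + 2 * a) * θ) := by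
  have hsin₁ : (1 - 2 * a) * (sin θ * ₂F₁ (-a + 1) a (3 / 2) (sin θ ^ 2)) =
      sin ((1 - 2 * a) * θ) := by
    convert sin_mul_ordinaryHypergeometric_three_halves_sin_sq (1 / 2 - a) hθ using 4 <;> ring
  have hsin₂ : (1 + 2 * a) * (sin θ * ₂F₁ (-a) (a + 1) (3 / 2) (sin θ ^ 2)) =
      sin ((1 + 2 * a) * θ) := by
    rw [ordinaryHypergeometric_symm]
    convert sin_mul_ordinaryHypergeometric_three_halves_sin_sq (1 / 2 + a) hθ using 4 <;> ring
  have hrel := ordinaryHypergeometric_add_one_sub_add_one (-a) a (3 / 2) (norm_sin_sq_lt_one hθ)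
  rw [show (3 / 2 + 1 : ℝ) = 5 / 2 by norm_num, neg_add_eq_sub, add_comm a] at hrel
  rw [neg_add_eq_sub] at hsin₁
  rw [add_comm a] at hsin₂
  linear_combination (1 + 2 * a) * hsin₁ - (1 - 2 * a) * hsin₂ -
    (1 - 4 * a ^ 2) * sin θ * hrel

end Trigonometric

lemma poch_eq_ascPochhammer_eval (a : ℝ) (n : ℕ) : poch a n = (ascPochhammer ℝ n).eval a := by
  induction n with
  | zero => simp [poch]
  | succ n ih => rw [poch, Finset.prod_range_succ, ← poch, ih, ascPochhammer_succ_eval]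

lemma hasSum_poch (a b c : ℝ) {x : ℝ} (hx : ‖x‖ < 1) :
    HasSum (fun n : ℕ ↦ poch a n * poch b n / (poch c n * (n.factorial : ℝ)) * x ^ n)
      (₂F₁ a b c x) := by
  refine (hasSum_ordinaryHypergeometric a b c hx).congr_fun fun n ↦ ?_
  simp only [poch_eq_ascPochhammer_eval, ordinaryHypergeometricCoefficient]
  ring

lemma arcsin_sqrt_mem_Ioo {u : ℝ} (hu : u < 1) : arcsin (√u) ∈ Set.Ioo (-(π / 2)) (π / 2) :=
  ⟨neg_pi_div_two_lt_arcsin.2 (by linarith [sqrt_nonneg u]),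
    arcsin_lt_pi_div_two.2 (by rwa [sqrt_lt' one_pos, one_pow])⟩

lemma sin_arcsin_sqrt_sq {u : ℝ} (hu0 : 0 ≤ u) (hu : u ≤ 1) : sin (arcsin (√u)) ^ 2 = u := by
  rw [sin_arcsin (by linarith [sqrt_nonneg u]) (sqrt_le_one.2 hu), sq_sqrt hu0]

lemma two_mul_sin_two_mul_sub_sin_four_mul (β : ℝ) :
    2 * sin (2 * β) - sin (4 * β) = 8 * cos β * sin β ^ 3 := by
  rw [show 4 * β = 2 * (2 * β) by ring, sin_two_mul (2 * β), sin_two_mul, cos_two_mul, cos_sq']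
  ring

theorem two_hypergeom_identities (u : ℝ) (hu0 : 0 ≤ u) (hu : u < 1) :
    ∀ β : ℝ, β = Real.arcsin (Real.sqrt u) / 3 →
      HasSum (fun n : ℕ =>
          poch (-2/3) n * poch (-1/3) n / (poch (-1/2) n * (n.factorial : ℝ)) * u ^ n)
        (2/3 * Real.cos (2 * β) + 1/3 * Real.cos (4 * β)) ∧
      (0 < u →
        HasSum (fun n : ℕ =>
            poch (5/6) n * poch (7/6) n / (poch (5/2) n * (n.factorial : ℝ)) * u ^ n)
          (27 * Real.cos β * Real.sin β ^ 3 / Real.sin (3 * β) ^ 3)) := by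
  intro β hβ
  have hβu : arcsin (√u) = 3 * β := by rw [hβ, mul_div_cancel₀ _ three_ne_zero]
  have hθ : 3 * β ∈ Set.Ioo (-(π / 2)) (π / 2) := hβu ▸ arcsin_sqrt_mem_Ioo hu
  have hsin : sin (3 * β) ^ 2 = u := hβu ▸ sin_arcsin_sqrt_sq hu0 hu.le
  have hnorm : ‖u‖ < 1 := by rwa [norm_of_nonneg hu0]
  refine ⟨?_, fun hpos ↦ ?_⟩
  · convert hasSum_poch (-2 / 3) (-1 / 3) (-1 / 2) hnorm using 1
    have h := ordinaryHypergeometric_neg_one_half_sin_sq (1 / 6) hθ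
    rw [hsin] at h
    norm_num [← mul_assoc] at h ⊢
    exact h.symm
  · convert hasSum_poch (5 / 6) (7 / 6) (5 / 2) hnorm using 1
    have hne : sin (3 * β) ≠ 0 := by
      intro h₀
      simp [← hsin, h₀] at hpos
    have h := sin_cube_mul_ordinaryHypergeometric_five_halves_sin_sq (1 / 6) hθ
    rw [hsin] at h
    norm_num [← mul_assoc] at h
    rw [div_eq_iff (pow_ne_zero 3 hne)]
    linear_combination -81 / 16 * h - 27 / 8 * two_mul_sin_two_mul_sub_sin_four_mul β
end

section
/- For every real number r and every real z with 0 ≤ z < 2/(3√3), the series ∑_{n≥0} C(3n/2 + r, n) z^n converges and equals (3/(√3 cos β − sin β)²)^r · 1/(cos β · (cos β − √3 sin β)), where β = (1/3)·arcsin(3√3 z/2). (For such z one has 0 ≤ β < π/6, so the relevant bases are positive.) -/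
open Real

/-- Generalized binomial coefficient `C(a,n) = a(a-1)⋯(a-n+1)/n!`. -/
noncomputable def gbinom (a : ℝ) (n : ℕ) : ℝ :=
  (∏ i ∈ Finset.range n, (a - i)) / (n.factorial : ℝ)

/-!
Put `u = B - 1` and `z = u * B ^ (-p)`. Expanding the powers of `B = 1 + u` in
`∑ C(pn + r, n) z ^ n = B ^ (r + 1) * ∑ C(pn + r, n) u ^ n * (1 + u) ^ (-(pn + r) - 1)`
turns the last sum into a double series whose `N`-th diagonal is, up to `u ^ N`, an `N`-th finite
difference of a polynomial of degree `N` with leading coefficient `(p - 1) ^ N / N!`. For `B` near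
`1` the diagonals thus form a geometric series, and the sum is `B ^ (r + 1) / (p - (p - 1) * B)`.
Analytic continuation in `B`, rather than in `z`, carries this up to the critical point
`p / (p - 1)` of `z`, whose critical value is the radius of convergence.

For `p = 3 / 2` the substitution `B = 3 / D ^ 2` turns `z = (B - 1) * B ^ (-p)` into the cubic
`3 * D - D ^ 3 = 3 * √3 * z`, which `D = √3 * cos β - sin β = 2 * cos (β + π / 6)` solves by
trisection.
-/

open Filter Finset FormalMultilinearSeries Topology

lemma gbinom_eq_choose (a : ℝ) (n : ℕ) : gbinom a n = Ring.choose a n := by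
  rw [Ring.choose_eq_smul, ← Polynomial.aeval_eq_smeval, Polynomial.aeval_def,
    Polynomial.eval₂_eq_eval_map, descPochhammer_map, descPochhammer_eval_eq_prod_range, gbinom,
    smul_eq_mul, div_eq_inv_mul]

lemma hasSum_gbinom_mul_pow (a : ℝ) {u : ℝ} (hu : |u| < 1) :
    HasSum (fun k ↦ gbinom a k * u ^ k) ((1 + u) ^ a) := by
  have hu' : u ∈ Metric.eball (0 : ℝ) 1 := by
    rwa [← ENNReal.ofReal_one, Metric.eball_ofReal, mem_ball_zero_iff]
  have h := (one_add_rpow_hasFPowerSeriesOnBall_zero (a := a)).hasSum hu'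
  simp only [binomialSeries_apply, zero_add] at h
  simpa [gbinom_eq_choose] using h

lemma gbinom_reflection (a : ℝ) (n : ℕ) : gbinom a n = (-1) ^ n * gbinom (n - 1 - a) n := by
  have h := Ring.choose_neg (-a) n
  rw [neg_neg] at h
  rw [gbinom_eq_choose, gbinom_eq_choose, h, Int.negOnePow_def,
    show (n : ℝ) - 1 - a = -a + n - 1 by ring]
  simp [Units.smul_def]

lemma abs_gbinom_le (a : ℝ) (n : ℕ) : |gbinom a n| ≤ (-1) ^ n * gbinom (-|a|) n := by
  rw [gbinom, gbinom, abs_div, abs_prod, Nat.abs_cast, ← mul_div_assoc, ← card_range n,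
    ← prod_const, card_range, ← prod_mul_distrib]
  gcongr with i
  calc |a - i| ≤ |a| + |(i : ℝ)| := abs_sub _ _
    _ = -1 * (-|a| - i) := by rw [Nat.abs_cast]; ring

lemma gbinom_mul_gbinom (a : ℝ) (n k : ℕ) :
    gbinom a n * gbinom (-a - 1) k =
      (-1) ^ k * (n + k).choose n * gbinom (a + k) (n + k) := by
  have hmul : ((n + k).choose n : ℝ) * gbinom (a + k) (n + k) = gbinom (a + k) k * gbinom a n := by
    rw [Nat.choose_symm_add]
    simpa only [gbinom_eq_choose, nsmul_eq_mul] using Ring.choose_add_smul_choose a n k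
  have hneg : gbinom (-a - 1) k = (-1) ^ k * gbinom (a + k) k := by
    rw [gbinom_reflection]
    ring_nf
  linear_combination gbinom a n * hneg - (-1) ^ k * hmul

lemma fwdDiff_iter_eval_of_natDegree_le {R : Type*} [CommRing R] {P : Polynomial R} {N : ℕ}
    (hP : P.natDegree ≤ N) (x : R) :
    (fwdDiff 1)^[N] (fun y ↦ P.eval y) x = P.coeff N * N.factorial := by
  rcases hP.lt_or_eq with hlt | rfl
  · rw [Polynomial.fwdDiff_iter_eq_zero_of_degree_lt hlt, P.coeff_eq_zero_of_natDegree_lt hlt]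
    simp
  · rw [Polynomial.fwdDiff_iter_degree_eq_factorial]
    simp

lemma fwdDiff_iter_gbinom_affine (q s : ℝ) (N : ℕ) (x : ℝ) :
    (fwdDiff 1)^[N] (fun y ↦ gbinom (q * y + s) N) x = q ^ N := by
  let L (i : ℕ) : Polynomial ℝ := .C q * .X + .C (s - i)
  have hL : ∀ i ∈ range N, (L i).natDegree ≤ 1 := fun i _ ↦ Polynomial.natDegree_linear_le
  have hdeg : (∏ i ∈ range N, L i).natDegree ≤ N :=
    (Polynomial.natDegree_prod_le _ _).trans <| (sum_le_sum hL).trans (by simp)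
  have hcoeff : (∏ i ∈ range N, L i).coeff N = q ^ N := by
    simpa [L, Polynomial.coeff_C] using Polynomial.coeff_prod_of_natDegree_le _ L 1 hL
  have heval : (fun y ↦ gbinom (q * y + s) N) =
      (N.factorial : ℝ)⁻¹ • fun y ↦ (∏ i ∈ range N, L i).eval y := by
    funext y
    simp [L, gbinom, Polynomial.eval_prod, div_eq_inv_mul, add_sub_assoc]
  rw [heval, fwdDiff_iter_const_smul, Pi.smul_apply, fwdDiff_iter_eval_of_natDegree_le hdeg,
    hcoeff, smul_eq_mul]
  field_simp

lemma sum_antidiagonal_gbinom_mul_gbinom (p r : ℝ) (N : ℕ) :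
    ∑ ij ∈ antidiagonal N, gbinom (p * ij.1 + r) ij.1 * gbinom (-(p * ij.1 + r) - 1) ij.2 =
      (p - 1) ^ N := by
  rw [← fwdDiff_iter_gbinom_affine (p - 1) (r + N) N 0, fwdDiff_iter_eq_sum_shift,
    Nat.sum_antidiagonal_eq_sum_range_succ_mk]
  refine sum_congr rfl fun n hn ↦ ?_
  have hnN : n ≤ N := Nat.lt_succ_iff.1 (mem_range.1 hn)
  rw [gbinom_mul_gbinom, Nat.add_sub_cancel' hnN, Nat.cast_sub hnN, zsmul_eq_mul, zero_add,
    nsmul_one]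
  push_cast
  ring_nf

lemma hasSum_neg_one_pow_mul_gbinom_mul_pow (a : ℝ) {t : ℝ} (ht : |t| < 1) :
    HasSum (fun k ↦ (-1) ^ k * gbinom a k * t ^ k) ((1 - t) ^ a) := by
  have h := hasSum_gbinom_mul_pow a (u := -t) (by rwa [abs_neg])
  rw [← sub_eq_add_neg] at h
  refine h.congr_fun fun k ↦ ?_
  rw [neg_pow]
  ring

section majorant

variable (a : ℝ) {t : ℝ} (ht₀ : 0 ≤ t) (ht₁ : t < 1)
include ht₀ ht₁

lemma summable_abs_gbinom_mul_pow : Summable fun k ↦ |gbinom a k| * t ^ k :=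
  .of_nonneg_of_le (fun _ ↦ by positivity)
    (fun k ↦ mul_le_mul_of_nonneg_right (abs_gbinom_le a k) (by positivity))
    (hasSum_neg_one_pow_mul_gbinom_mul_pow _ (by rwa [abs_of_nonneg ht₀])).summable

lemma tsum_abs_gbinom_mul_pow_le : ∑' k, |gbinom a k| * t ^ k ≤ (1 - t) ^ (-|a|) :=
  hasSum_le (fun k ↦ mul_le_mul_of_nonneg_right (abs_gbinom_le a k) (by positivity))
    (summable_abs_gbinom_mul_pow a ht₀ ht₁).hasSum
    (hasSum_neg_one_pow_mul_gbinom_mul_pow _ (by rwa [abs_of_nonneg ht₀]))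

lemma abs_gbinom_mul_pow_le (k : ℕ) : |gbinom a k| * t ^ k ≤ (1 - t) ^ (-|a|) :=
  ((summable_abs_gbinom_mul_pow a ht₀ ht₁).le_tsum k fun _ _ ↦ by positivity).trans
    (tsum_abs_gbinom_mul_pow_le a ht₀ ht₁)

end majorant

lemma rpow_neg_abs_mul_natCast_add_le {x : ℝ} (hx₀ : 0 < x) (hx₁ : x ≤ 1) (a b : ℝ) (n : ℕ) :
    x ^ (-|a * n + b|) ≤ x ^ (-|b|) * (x ^ (-|a|)) ^ n := by
  have habs : |a * n + b| ≤ |a| * n + |b| := by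
    simpa [abs_mul] using abs_add_le (a * n) b
  calc x ^ (-|a * n + b|) ≤ x ^ (-|b| + -|a| * n) :=
        rpow_le_rpow_of_exponent_ge hx₀ hx₁ (by linarith)
    _ = x ^ (-|b|) * (x ^ (-|a|)) ^ n := by rw [rpow_add hx₀, rpow_mul_natCast hx₀.le]

-- For `1 < p` the choice `t = p⁻¹` maximizes `t * (1 - t) ^ |p - 1|` and gives the exact radius.
lemma abs_gbinom_affine_mul_pow_le (p r : ℝ) {t : ℝ} (ht₀ : 0 ≤ t) (ht₁ : t < 1) (n : ℕ) :
    |gbinom (p * n + r) n| * (t * (1 - t) ^ |p - 1|) ^ n ≤ (1 - t) ^ (-|r + 1|) := by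
  have ht : 0 < 1 - t := sub_pos.2 ht₁
  have hreflect : |gbinom (p * n + r) n| = |gbinom (-((p - 1) * n + (r + 1))) n| := by
    rw [gbinom_reflection, abs_mul, abs_pow, abs_neg, abs_one, one_pow, one_mul]
    ring_nf
  have hterm := abs_gbinom_mul_pow_le (-((p - 1) * n + (r + 1))) ht₀ ht₁ n
  rw [abs_neg] at hterm
  calc |gbinom (p * n + r) n| * (t * (1 - t) ^ |p - 1|) ^ n
      = |gbinom (-((p - 1) * n + (r + 1))) n| * t ^ n * ((1 - t) ^ |p - 1|) ^ n := by
        rw [hreflect, mul_pow, mul_assoc]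
    _ ≤ (1 - t) ^ (-|(p - 1) * n + (r + 1)|) * ((1 - t) ^ |p - 1|) ^ n := by
        gcongr
    _ ≤ (1 - t) ^ (-|r + 1|) * ((1 - t) ^ (-|p - 1|)) ^ n * ((1 - t) ^ |p - 1|) ^ n := by
        gcongr
        exact rpow_neg_abs_mul_natCast_add_le ht (by linarith) _ _ n
    _ = (1 - t) ^ (-|r + 1|) := by
        rw [mul_assoc, ← mul_pow, ← rpow_add ht, neg_add_cancel, rpow_zero, one_pow, mul_one]

lemma summable_gbinom_mul_gbinom_mul_pow (p r : ℝ) {t u : ℝ} (ht₀ : 0 < t) (ht₁ : t < 1)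
    (hu : |u| < 1) (hut : |u| * (1 - |u|) ^ (-|p|) < t * (1 - t) ^ |p - 1|) :
    Summable fun x : ℕ × ℕ ↦ gbinom (p * x.1 + r) x.1 * u ^ x.1 *
      (gbinom (-(p * x.1 + r) - 1) x.2 * u ^ x.2) := by
  have hu' : 0 < 1 - |u| := sub_pos.2 hu
  set σ := t * (1 - t) ^ |p - 1|
  have hσ : 0 < σ := mul_pos ht₀ (rpow_pos_of_pos (sub_pos.2 ht₁) _)
  refine .of_norm <| (summable_prod_of_nonneg fun _ ↦ norm_nonneg _).2 ⟨fun n ↦ ?_, ?_⟩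
  · simpa [abs_mul] using
      (summable_abs_gbinom_mul_pow (-(p * n + r) - 1) (abs_nonneg u) hu).mul_left
        (|gbinom (p * n + r) n| * |u| ^ n)
  refine .of_nonneg_of_le (fun n ↦ tsum_nonneg fun k ↦ norm_nonneg _) (fun n ↦ ?_)
    ((summable_geometric_of_lt_one (by positivity) ((div_lt_one hσ).2 hut)).mul_left
      ((1 - t) ^ (-|r + 1|) * (1 - |u|) ^ (-|r + 1|)))
  simp only [norm_eq_abs, abs_mul, abs_pow, tsum_mul_left]
  calc |gbinom (p * n + r) n| * |u| ^ n * ∑' k, |gbinom (-(p * n + r) - 1) k| * |u| ^ k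
      ≤ |gbinom (p * n + r) n| * |u| ^ n * (1 - |u|) ^ (-|-(p * n + r) - 1|) := by
        gcongr
        exact tsum_abs_gbinom_mul_pow_le _ (abs_nonneg u) hu
    _ = |gbinom (p * n + r) n| * |u| ^ n * (1 - |u|) ^ (-|p * n + (r + 1)|) := by
        rw [← abs_neg (p * n + (r + 1))]
        ring_nf
    _ ≤ (1 - t) ^ (-|r + 1|) / σ ^ n * |u| ^ n *
          ((1 - |u|) ^ (-|r + 1|) * ((1 - |u|) ^ (-|p|)) ^ n) := by
        gcongr
        · exact (le_div_iff₀ (by positivity)).2 (abs_gbinom_affine_mul_pow_le p r ht₀.le ht₁ n)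
        · exact rpow_neg_abs_mul_natCast_add_le hu' (by linarith [abs_nonneg u]) _ _ n
    _ = (1 - t) ^ (-|r + 1|) * (1 - |u|) ^ (-|r + 1|) * (|u| * (1 - |u|) ^ (-|p|) / σ) ^ n := by
        rw [div_pow, mul_pow]
        ring

lemma hasSum_sum_antidiagonal {A M : Type*} [AddMonoid A] [HasAntidiagonal A] [AddCommMonoid M]
    [TopologicalSpace M] [ContinuousAdd M] [RegularSpace M] {F : A × A → M} {S : M}
    (hF : HasSum F S) : HasSum (fun N ↦ ∑ ij ∈ antidiagonal N, F ij) S :=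
  (HasAntidiagonal.sigmaAntidiagonalEquivProd.hasSum_iff.2 hF).sigma fun N ↦
    (antidiagonal N).hasSum F

lemma hasSum_gbinom_mul_pow_mul_rpow (p r : ℝ) {u : ℝ} (hu : |u| < 1) (hpu : |(p - 1) * u| < 1)
    (hF : Summable fun x : ℕ × ℕ ↦ gbinom (p * x.1 + r) x.1 * u ^ x.1 *
      (gbinom (-(p * x.1 + r) - 1) x.2 * u ^ x.2)) :
    HasSum (fun n : ℕ ↦ gbinom (p * n + r) n * u ^ n * (1 + u) ^ (-(p * n + r) - 1))
      (1 - (p - 1) * u)⁻¹ := by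
  have hrow := hF.hasSum.prod_fiberwise fun n ↦
    (hasSum_gbinom_mul_pow (-(p * n + r) - 1) hu).mul_left (gbinom (p * n + r) n * u ^ n)
  have hdiag : ∀ N : ℕ, ∑ x ∈ antidiagonal N, gbinom (p * x.1 + r) x.1 * u ^ x.1 *
      (gbinom (-(p * x.1 + r) - 1) x.2 * u ^ x.2) = ((p - 1) * u) ^ N := fun N ↦ by
    rw [mul_pow, ← sum_antidiagonal_gbinom_mul_gbinom p r, sum_mul]
    refine sum_congr rfl fun x hx ↦ ?_
    rw [← mem_antidiagonal.1 hx, pow_add]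
    ring
  have hgeom := hasSum_sum_antidiagonal hF.hasSum
  simp only [hdiag] at hgeom
  rwa [hgeom.unique (hasSum_geometric_of_abs_lt_one hpu)] at hrow

/-- The inverse function of Lambert's generalized binomial series: `B = 1 + z * B ^ p` means that
`z = genBinomInv p B`. Parametrizing by `B` avoids having to construct the series' sum `B(z)`. -/
noncomputable def genBinomInv (p B : ℝ) : ℝ :=
  (B - 1) * B ^ (-p)

lemma eventually_hasSum_gbinom_mul_genBinomInv_pow (p r : ℝ) :
    ∀ᶠ B : ℝ in 𝓝 1, HasSum (fun n : ℕ ↦ gbinom (p * n + r) n * genBinomInv p B ^ n)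
      (B ^ (r + 1) / (p - (p - 1) * B)) := by
  have hu : ∀ᶠ B : ℝ in 𝓝 1, |B - 1| < 1 :=
    ((by fun_prop : Continuous fun B : ℝ ↦ |B - 1|).tendsto' 1 0 (by simp)).eventually_lt_const
      one_pos
  have hpu : ∀ᶠ B : ℝ in 𝓝 1, |(p - 1) * (B - 1)| < 1 :=
    ((by fun_prop : Continuous fun B : ℝ ↦ |(p - 1) * (B - 1)|).tendsto' 1 0
      (by simp)).eventually_lt_const one_pos
  have hcont : ContinuousAt (fun B : ℝ ↦ |B - 1| * (1 - |B - 1|) ^ (-|p|)) 1 :=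
    .mul (by fun_prop) (.rpow_const (by fun_prop) (by simp))
  have hsmall : ∀ᶠ B : ℝ in 𝓝 1,
      |B - 1| * (1 - |B - 1|) ^ (-|p|) < 1 / 2 * (1 - 1 / 2) ^ |p - 1| :=
    hcont.tendsto.eventually_lt_const <| by
      rw [sub_self, abs_zero, zero_mul]
      positivity
  filter_upwards [hu, hpu, hsmall] with B hu hpu hsmall
  have hB : 0 < B := by linarith [neg_lt_of_abs_lt hu]
  have h := (hasSum_gbinom_mul_pow_mul_rpow p r hu hpu <| summable_gbinom_mul_gbinom_mul_pow p r
    one_half_pos one_half_lt_one hu hsmall).mul_left (B ^ (r + 1))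
  rw [show 1 - (p - 1) * (B - 1) = p - (p - 1) * B by ring, ← div_eq_mul_inv] at h
  refine h.congr_fun fun n ↦ ?_
  rw [genBinomInv, add_sub_cancel, mul_pow, ← rpow_mul_natCast hB.le,
    show -p * n = (r + 1) + (-(p * n + r) - 1) by ring, rpow_add hB]
  ring

lemma hasFPowerSeriesOnBall_ofScalarsSum {c : ℕ → ℝ} {ρ K : ℝ} (hρ : 0 < ρ)
    (hc : ∀ n, |c n| * ρ ^ n ≤ K) :
    HasFPowerSeriesOnBall (ofScalarsSum c) (ofScalars ℝ c) 0 (ENNReal.ofReal ρ) := by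
  have hrad : ENNReal.ofReal ρ ≤ (ofScalars ℝ c).radius :=
    le_radius_of_bound _ K fun n ↦ by
      simpa [ofScalars_norm, hρ.le] using hc n
  have hρ' : 0 < ENNReal.ofReal ρ := ENNReal.ofReal_pos.2 hρ
  exact ((ofScalars ℝ c).hasFPowerSeriesOnBall (hρ'.trans_le hrad)).mono hρ' hrad

/-- The radius of convergence of `∑ gbinom (p * n + r) n * z ^ n` for `1 < p`. It is the value of
`genBinomInv p` at its critical point `p / (p - 1)`. -/
noncomputable def genBinomRadius (p : ℝ) : ℝ :=
  (p - 1) ^ (p - 1) / p ^ p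

lemma genBinomRadius_eq {p : ℝ} (hp : 1 < p) :
    genBinomRadius p = p⁻¹ * (1 - p⁻¹) ^ (p - 1) := by
  have hp₀ : 0 < p := one_pos.trans hp
  rw [genBinomRadius, show 1 - p⁻¹ = (p - 1) / p by field_simp, div_rpow (by linarith) hp₀.le,
    rpow_sub_one hp₀.ne' p]
  field_simp

lemma genBinomRadius_pos {p : ℝ} (hp : 1 < p) : 0 < genBinomRadius p :=
  div_pos (rpow_pos_of_pos (sub_pos.2 hp) _) (rpow_pos_of_pos (one_pos.trans hp) _)

lemma genBinomRadius_three_halves : genBinomRadius (3 / 2) = 2 / (3 * √3) := by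
  rw [genBinomRadius_eq (by norm_num), show (3 / 2 : ℝ) - 1 = 1 / 2 by norm_num, ← sqrt_eq_rpow,
    show 1 - (3 / 2 : ℝ)⁻¹ = 3⁻¹ by norm_num, sqrt_inv]
  field_simp

lemma abs_gbinom_affine_mul_genBinomRadius_pow_le {p : ℝ} (hp : 1 < p) (r : ℝ) (n : ℕ) :
    |gbinom (p * n + r) n| * genBinomRadius p ^ n ≤ (1 - p⁻¹) ^ (-|r + 1|) := by
  have h := abs_gbinom_affine_mul_pow_le p r (t := p⁻¹) (by positivity) (inv_lt_one_of_one_lt₀ hp) n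
  rwa [abs_of_pos (sub_pos.2 hp), ← genBinomRadius_eq hp] at h

lemma hasFPowerSeriesOnBall_gbinom {p : ℝ} (hp : 1 < p) (r : ℝ) :
    HasFPowerSeriesOnBall (ofScalarsSum fun n : ℕ ↦ gbinom (p * n + r) n)
      (ofScalars ℝ fun n : ℕ ↦ gbinom (p * n + r) n) 0 (ENNReal.ofReal (genBinomRadius p)) :=
  hasFPowerSeriesOnBall_ofScalarsSum (genBinomRadius_pos hp)
    (abs_gbinom_affine_mul_genBinomRadius_pow_le hp r)

lemma hasSum_ofScalarsSum_gbinom {p : ℝ} (hp : 1 < p) (r : ℝ) {z : ℝ}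
    (hz : |z| < genBinomRadius p) :
    HasSum (fun n : ℕ ↦ gbinom (p * n + r) n * z ^ n)
      (ofScalarsSum (fun n : ℕ ↦ gbinom (p * n + r) n) z) := by
  have h := (hasFPowerSeriesOnBall_gbinom hp r).hasSum (y := z) (by simpa [Metric.eball_ofReal])
  simpa [ofScalars_apply_eq, mul_comm] using h

lemma hasDerivAt_genBinomInv (p : ℝ) {B : ℝ} (hB : 0 < B) :
    HasDerivAt (genBinomInv p) (B ^ (-p - 1) * (p - (p - 1) * B)) B := by
  have h := ((hasDerivAt_id B).sub_const 1).mul (hasDerivAt_rpow_const (p := -p) (.inl hB.ne'))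
  refine h.congr_deriv ?_
  rw [rpow_sub_one hB.ne']
  simp only [id_eq, one_mul]
  field_simp
  ring

lemma analyticAt_rpow_const (a : ℝ) {x : ℝ} (hx : x ≠ 0) : AnalyticAt ℝ (fun y ↦ y ^ a) x :=
  (contDiffAt_rpow_const_of_ne hx).analyticAt

lemma analyticAt_genBinomInv (p : ℝ) {B : ℝ} (hB : B ≠ 0) : AnalyticAt ℝ (genBinomInv p) B :=
  (analyticAt_id.sub analyticAt_const).mul (analyticAt_rpow_const (-p) hB)

section

variable {p : ℝ} (hp : 1 < p)
include hp

lemma sub_mul_pos_of_lt_div {B : ℝ} (hB : B < p / (p - 1)) : 0 < p - (p - 1) * B := by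
  rw [lt_div_iff₀ (sub_pos.2 hp)] at hB
  linarith

lemma monotoneOn_genBinomInv : MonotoneOn (genBinomInv p) (Set.Ioo 0 (p / (p - 1))) := by
  refine monotoneOn_of_hasDerivWithinAt_nonneg (convex_Ioo _ _)
    (fun B hB ↦ (hasDerivAt_genBinomInv p hB.1).continuousAt.continuousWithinAt)
    (fun B hB ↦ (hasDerivAt_genBinomInv p (interior_subset hB).1).hasDerivWithinAt) fun B hB ↦ ?_
  rw [interior_Ioo] at hB
  exact mul_nonneg (rpow_nonneg hB.1.le _) (sub_mul_pos_of_lt_div hp hB.2).le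

lemma ordConnected_genBinomInv_preimage (ρ : ℝ) :
    (Set.Ioo 0 (p / (p - 1)) ∩ {B | |genBinomInv p B| < ρ}).OrdConnected := by
  refine ⟨fun x hx y hy B hB ↦ ?_⟩
  have hBI : B ∈ Set.Ioo 0 (p / (p - 1)) := ⟨hx.1.1.trans_le hB.1, hB.2.trans_lt hy.1.2⟩
  have hxB := monotoneOn_genBinomInv hp hx.1 hBI hB.1
  have hBy := monotoneOn_genBinomInv hp hBI hy.1 hB.2
  exact ⟨hBI, abs_lt.2 ⟨(abs_lt.1 hx.2).1.trans_le hxB, hBy.trans_lt (abs_lt.1 hy.2).2⟩⟩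

theorem hasSum_gbinom_mul_genBinomInv_pow (r : ℝ) {B : ℝ} (hB : B ∈ Set.Ioo 0 (p / (p - 1)))
    (hBρ : |genBinomInv p B| < genBinomRadius p) :
    HasSum (fun n : ℕ ↦ gbinom (p * n + r) n * genBinomInv p B ^ n)
      (B ^ (r + 1) / (p - (p - 1) * B)) := by
  let c (n : ℕ) : ℝ := gbinom (p * n + r) n
  let U : Set ℝ := Set.Ioo 0 (p / (p - 1)) ∩ {B | |genBinomInv p B| < genBinomRadius p}
  have hseries : AnalyticOnNhd ℝ (fun B ↦ ofScalarsSum c (genBinomInv p B)) U := fun x hx ↦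
    ((hasFPowerSeriesOnBall_gbinom hp r).analyticAt_of_mem (by
      simpa [Metric.eball_ofReal] using hx.2)).fun_comp (analyticAt_genBinomInv p hx.1.1.ne')
  have hclosed : AnalyticOnNhd ℝ (fun B ↦ B ^ (r + 1) / (p - (p - 1) * B)) U := fun x hx ↦
    (analyticAt_rpow_const (r + 1) hx.1.1.ne').div (by fun_prop)
      (sub_mul_pos_of_lt_div hp hx.1.2).ne'
  have h1 : (1 : ℝ) ∈ U :=
    ⟨⟨one_pos, (one_lt_div (sub_pos.2 hp)).2 (by linarith)⟩, by
      simpa [genBinomInv] using genBinomRadius_pos hp⟩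
  have hnear : ∀ᶠ x in 𝓝 1, |genBinomInv p x| < genBinomRadius p :=
    (analyticAt_genBinomInv p one_ne_zero).continuousAt.abs.tendsto.eventually_lt_const h1.2
  have hlocal : (fun B ↦ ofScalarsSum c (genBinomInv p B)) =ᶠ[𝓝 1]
      fun B ↦ B ^ (r + 1) / (p - (p - 1) * B) := by
    filter_upwards [hnear, eventually_hasSum_gbinom_mul_genBinomInv_pow p r] with x hx hsum
    exact (hasSum_ofScalarsSum_gbinom hp r hx).unique hsum
  have hU : IsPreconnected U := (ordConnected_genBinomInv_preimage hp _).isPreconnected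
  have hEq := hseries.eqOn_of_preconnected_of_eventuallyEq hclosed hU h1 hlocal
  have hEqB : ofScalarsSum c (genBinomInv p B) = B ^ (r + 1) / (p - (p - 1) * B) := hEq ⟨hB, hBρ⟩
  exact hEqB ▸ hasSum_ofScalarsSum_gbinom hp r hBρ

end

lemma sqrt_three_mul_cos_sub_sin (β : ℝ) : √3 * cos β - sin β = 2 * cos (β + π / 6) := by
  rw [cos_add, cos_pi_div_six, sin_pi_div_six]
  ring

lemma cos_sub_sqrt_three_mul_sin (β : ℝ) : cos β - √3 * sin β = 2 * cos (β + π / 3) := by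
  rw [cos_add, cos_pi_div_three, sin_pi_div_three]
  ring

lemma three_mul_sub_pow_three_eq_sin_three_mul (β : ℝ) :
    3 * (√3 * cos β - sin β) - (√3 * cos β - sin β) ^ 3 = 2 * sin (3 * β) := by
  have h : cos (3 * (β + π / 6)) = -sin (3 * β) := by
    rw [← cos_add_pi_div_two]
    ring_nf
  rw [sqrt_three_mul_cos_sub_sin]
  linear_combination 2 * cos_three_mul (β + π / 6) - 2 * h

lemma sqrt_three_mul_cos_sub_sin_sq (β : ℝ) :
    (√3 * cos β - sin β) ^ 2 = 1 + 2 * (cos β * (cos β - √3 * sin β)) := by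
  linear_combination cos β ^ 2 * sq_sqrt (zero_le_three (α := ℝ)) + sin_sq_add_cos_sq β

lemma arcsin_div_three_mem_Ioo {x : ℝ} (hx : |x| < 1) :
    arcsin x / 3 ∈ Set.Ioo (-(π / 6)) (π / 6) := by
  have hlower := neg_pi_div_two_lt_arcsin.2 (abs_lt.1 hx).1
  have hupper := arcsin_lt_pi_div_two.2 (abs_lt.1 hx).2
  constructor <;> linarith

section

variable {β : ℝ} (hβ : β ∈ Set.Ioo (-(π / 6)) (π / 6))
include hβ

lemma sqrt_three_mul_cos_sub_sin_pos : 0 < √3 * cos β - sin β := by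
  rw [sqrt_three_mul_cos_sub_sin]
  exact mul_pos two_pos (cos_pos_of_mem_Ioo ⟨by linarith [hβ.1, hβ.2], by linarith [hβ.1, hβ.2]⟩)

lemma cos_mul_cos_sub_sqrt_three_mul_sin_pos : 0 < cos β * (cos β - √3 * sin β) := by
  rw [cos_sub_sqrt_three_mul_sin]
  have hcos : 0 < cos β := cos_pos_of_mem_Ioo ⟨by linarith [hβ.1, hβ.2], by linarith [hβ.1, hβ.2]⟩
  have hcos_add : 0 < cos (β + π / 3) :=
    cos_pos_of_mem_Ioo ⟨by linarith [hβ.1, hβ.2], by linarith [hβ.2]⟩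
  positivity

end

lemma genBinomInv_three_halves {D : ℝ} (hD : 0 < D) :
    genBinomInv (3 / 2) (3 / D ^ 2) = (3 * D - D ^ 3) / (3 * √3) := by
  have hrpow : (3 / D ^ 2) ^ (3 / 2 : ℝ) = 3 * √3 / D ^ 3 := by
    rw [rpow_div_two_eq_sqrt _ (by positivity), sqrt_div zero_le_three, sqrt_sq hD.le,
      rpow_ofNat, div_pow, pow_succ, sq_sqrt zero_le_three]
  rw [genBinomInv, rpow_neg (by positivity), hrpow]
  field_simp

lemma rpow_add_one_div_three_halves_sub {D E : ℝ} (hE : 0 < E) (hDE : D ^ 2 = 1 + 2 * E) (r : ℝ) :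
    (3 / D ^ 2) ^ (r + 1) / (3 / 2 - (3 / 2 - 1) * (3 / D ^ 2)) = (3 / D ^ 2) ^ r * (1 / E) := by
  have hD : D ≠ 0 := pow_ne_zero_iff two_ne_zero |>.1 (by linarith)
  have hden : 3 / 2 - (3 / 2 - 1) * (3 / D ^ 2) = 3 / D ^ 2 * E := by
    field_simp
    linarith
  rw [hden, rpow_add_one (by positivity)]
  field_simp

theorem binom_genfun_p_three_halves_general (r z : ℝ) (hz : |z| < 2 / (3 * √3)) :
    ∀ β : ℝ, β = arcsin (3 * √3 * z / 2) / 3 →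
      HasSum (fun n : ℕ ↦ gbinom (3 * (n : ℝ) / 2 + r) n * z ^ n)
        ((3 / (√3 * cos β - sin β) ^ 2) ^ r * (1 / (cos β * (cos β - √3 * sin β)))) := by
  intro β hβ
  have hx : |3 * √3 * z / 2| < 1 := by
    rw [lt_div_iff₀ (by positivity)] at hz
    rw [abs_div, abs_mul, abs_of_pos (by positivity : 0 < 3 * √3), abs_two]
    linarith
  have hβI : β ∈ Set.Ioo (-(π / 6)) (π / 6) := hβ ▸ arcsin_div_three_mem_Ioo hx
  have hsin : 2 * sin (3 * β) = 3 * √3 * z := by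
    rw [hβ, mul_div_cancel₀ _ three_ne_zero, sin_arcsin (abs_lt.1 hx).1.le (abs_lt.1 hx).2.le]
    ring
  have hD := sqrt_three_mul_cos_sub_sin_pos hβI
  have hE := cos_mul_cos_sub_sqrt_three_mul_sin_pos hβI
  have hDE := sqrt_three_mul_cos_sub_sin_sq β
  have hBz : genBinomInv (3 / 2) (3 / (√3 * cos β - sin β) ^ 2) = z := by
    rw [genBinomInv_three_halves hD, three_mul_sub_pow_three_eq_sin_three_mul, hsin]
    field_simp
  have hB : 3 / (√3 * cos β - sin β) ^ 2 ∈ Set.Ioo (0 : ℝ) (3 / 2 / (3 / 2 - 1)) := by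
    refine ⟨by positivity, (div_lt_iff₀ (by positivity)).2 ?_⟩
    linarith
  have h := hasSum_gbinom_mul_genBinomInv_pow (by norm_num) r hB
    (by rwa [hBz, genBinomRadius_three_halves])
  rw [hBz, rpow_add_one_div_three_halves_sub hE hDE] at h
  simpa only [mul_div_right_comm] using h

theorem binom_genfun_p_three_halves (r z : ℝ) (hz0 : 0 ≤ z)
    (hz : z < 2 / (3 * Real.sqrt 3)) :
    ∀ β : ℝ, β = Real.arcsin (3 * Real.sqrt 3 * z / 2) / 3 →
      HasSum (fun n : ℕ => gbinom (3 * (n : ℝ) / 2 + r) n * z ^ n)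
        ((3 / (Real.sqrt 3 * Real.cos β - Real.sin β) ^ 2) ^ r
          * (1 / (Real.cos β * (Real.cos β - Real.sqrt 3 * Real.sin β)))) :=
  binom_genfun_p_three_halves_general r z (by rwa [abs_of_nonneg hz0])
end
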